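/- arXiv:2411.10808 — 5 statements merged into one kernel-verified Lean document; each statement's English description precedes it below -/
import Mathlib

section
/- Let d ≥ 1, s ∈ ℝ^d, and let {R_k}_{k≥1} be a sequence of real d×d matrices. For each k ≥ 1 define the affine map T_k : ℝ^d → ℝ^d by T_k(z) = R_k z + s. Suppose there exists a real d×d matrix R_∞ such that: (i) every complex eigenvalue of R_∞ has modulus strictly less than 1; (ii) R_k → R_∞ entrywise as k → ∞; and (iii) there exists z̄ ∈ ℝ^d with T_k(z̄) = z̄ for all k ≥ 1. Then there exists a unique z* ∈ ℝ^d with T_k(z*) = z* for all k ≥ 1, and for every initialization z₀ ∈ ℝ^d the sequence defined by z_k = T_k(z_{k−1}) for k ≥ 1 converges linearly to z*: there exist C > 0, β ∈ [0,1), and K ≥ 1 such that ‖z_k − z*‖₂ ≤ C·β^k for all k ≥ K. -/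
open Filter Matrix

/-- The Euclidean (ℓ²) norm on `Fin d → ℝ`. -/
noncomputable def norm2 {d : ℕ} (x : Fin d → ℝ) : ℝ := Real.sqrt (∑ i, x i ^ 2)

/-!
Subtracting the common fixed point turns the affine iteration into the linear one
`e (k + 1) = R k (e k)`. Although powers of `R_∞` tend to zero, `R_∞` itself need not be a
contraction for the Euclidean norm; it is one for the equivalent norm
`p x = ∑ i < m, r⁻ⁱ ‖R_∞ⁱ x‖`, where `‖R_∞ᵐ‖ ≤ rᵐ` and `r < 1`. Being a contraction for `p` with
a factor `q > r` is an open condition on the operator, so all but finitely many `R k` satisfy it,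
and the error decays geometrically from there on. Uniqueness of the fixed point is the case of a
constant trajectory.
-/

open scoped Topology NNReal ENNReal

section LinearConvergence

variable {E : Type*} [SeminormedAddCommGroup E]

/-- Linear convergence of a sequence `x` to `a`: the error is eventually bounded by a convergent
geometric sequence. The threshold `1 ≤ K` matches sequences whose iterations are numbered from
one. -/
def ConvergesLinearly (x : ℕ → E) (a : E) : Prop :=
  ∃ C, 0 < C ∧ ∃ β : ℝ, 0 ≤ β ∧ β < 1 ∧ ∃ K, 1 ≤ K ∧ ∀ k, K ≤ k → ‖x k - a‖ ≤ C * β ^ k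

theorem ConvergesLinearly.tendsto {x : ℕ → E} {a : E} (h : ConvergesLinearly x a) :
    Tendsto x atTop (𝓝 a) := by
  obtain ⟨C, -, β, hβ₀, hβ₁, K, -, hbound⟩ := h
  have hgeom : Tendsto (fun k => C * β ^ k) atTop (𝓝 0) := by
    simpa only [mul_zero] using (tendsto_pow_atTop_nhds_zero_of_lt_one hβ₀ hβ₁).const_mul C
  rw [tendsto_iff_norm_sub_tendsto_zero]
  exact squeeze_zero' (.of_forall fun _ => norm_nonneg _) (eventually_atTop.2 ⟨K, hbound⟩) hgeom

theorem convergesLinearly_of_eventually_le_mul {p : E → ℝ} (hp : ∀ x, ‖x‖ ≤ p x) {q : ℝ}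
    (hq₀ : 0 < q) (hq₁ : q < 1) {x : ℕ → E} {a : E}
    (hx : ∀ᶠ k in atTop, p (x (k + 1) - a) ≤ q * p (x k - a)) : ConvergesLinearly x a := by
  obtain ⟨K, hK⟩ := eventually_atTop.1 (hx.and (eventually_ge_atTop 1))
  have hpK : 0 ≤ p (x K - a) := (norm_nonneg _).trans (hp _)
  refine ⟨p (x K - a) / q ^ K + 1, by positivity, q, hq₀.le, hq₁, K, (hK K le_rfl).2, ?_⟩
  intro k hk
  obtain ⟨n, rfl⟩ := Nat.exists_eq_add_of_le hk
  calc ‖x (K + n) - a‖ ≤ p (x (K + n) - a) := hp _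
    _ ≤ q ^ n * p (x K - a) :=
        le_geom (u := fun n => p (x (K + n) - a)) hq₀.le n fun i _ => (hK (K + i) (by omega)).1
    _ = p (x K - a) / q ^ K * q ^ (K + n) := by field_simp; ring
    _ ≤ (p (x K - a) / q ^ K + 1) * q ^ (K + n) := by gcongr; linarith

end LinearConvergence

section AdaptedSeminorm

variable {𝕜 E : Type*} [NontriviallyNormedField 𝕜] [SeminormedAddCommGroup E] [NormedSpace 𝕜 E]

/-- The adapted (Lyapunov) seminorm `x ↦ ∑ i < m, r⁻ⁱ ‖Bⁱ x‖` of an operator `B`, for which `B` is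
`r`-Lipschitz as soon as `r ≠ 0` and `‖Bᵐ‖ ≤ rᵐ`. -/
noncomputable def adaptedSeminorm (B : E →L[𝕜] E) (r : ℝ≥0) (m : ℕ) : Seminorm 𝕜 E :=
  ∑ i ∈ Finset.range m, r⁻¹ ^ i • (normSeminorm 𝕜 E).comp (B ^ i).toLinearMap

variable (B : E →L[𝕜] E) (r : ℝ≥0) {m : ℕ}

theorem adaptedSeminorm_apply (m : ℕ) (x : E) :
    adaptedSeminorm B r m x = ∑ i ∈ Finset.range m, (r : ℝ)⁻¹ ^ i * ‖(B ^ i) x‖ := by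
  rw [adaptedSeminorm, _root_.sum_apply]
  rfl

theorem norm_le_adaptedSeminorm (hm : m ≠ 0) (x : E) : ‖x‖ ≤ adaptedSeminorm B r m x := by
  rw [adaptedSeminorm_apply]
  simpa using Finset.single_le_sum (f := fun i => (r : ℝ)⁻¹ ^ i * ‖(B ^ i) x‖)
    (fun i _ => by positivity) (Finset.mem_range.2 (Nat.pos_of_ne_zero hm))

theorem adaptedSeminorm_le_mul_norm (m : ℕ) (x : E) :
    adaptedSeminorm B r m x ≤ (∑ i ∈ Finset.range m, (r : ℝ)⁻¹ ^ i * ‖B ^ i‖) * ‖x‖ := by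
  rw [adaptedSeminorm_apply, Finset.sum_mul]
  refine Finset.sum_le_sum fun i _ => ?_
  rw [mul_assoc]
  gcongr
  exact (B ^ i).le_opNorm x

variable {B r}

theorem adaptedSeminorm_map_le (hr : r ≠ 0) (hB : ‖B ^ m‖ ≤ r ^ m) (x : E) :
    adaptedSeminorm B r m (B x) ≤ r * adaptedSeminorm B r m x := by
  let w : ℕ → ℝ := fun i => (r : ℝ)⁻¹ ^ i * ‖(B ^ i) x‖
  have hr' : (r : ℝ) ≠ 0 := NNReal.coe_ne_zero.2 hr
  have hshift : adaptedSeminorm B r m (B x) = r * ∑ i ∈ Finset.range m, w (i + 1) := by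
    rw [adaptedSeminorm_apply, Finset.mul_sum]
    refine Finset.sum_congr rfl fun i _ => ?_
    simp only [w, pow_succ _ i, mul_apply_eq_comp]
    field_simp
  have hlast : w m ≤ w 0 := by
    have : ‖(B ^ m) x‖ ≤ r ^ m * ‖x‖ := (B ^ m).le_of_opNorm_le hB x
    simpa [w, inv_mul_le_iff₀ (pow_pos (NNReal.coe_pos.2 (pos_of_ne_zero hr)) m)] using this
  have htelescope := (Finset.sum_range_succ' w m).symm.trans (Finset.sum_range_succ w m)
  rw [hshift, adaptedSeminorm_apply]
  exact mul_le_mul_of_nonneg_left (by linarith) r.coe_nonneg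

end AdaptedSeminorm

theorem exists_nnreal_lt_one_le_pow {a : ℝ} (ha : a < 1) (m : ℕ) :
    ∃ r : ℝ≥0, r ≠ 0 ∧ r < 1 ∧ a ≤ (r : ℝ) ^ m := by
  have hpow : Tendsto (fun r : ℝ≥0 => (r : ℝ) ^ m) (𝓝[<] 1) (𝓝 1) := by
    have : Continuous fun r : ℝ≥0 => (r : ℝ) ^ m := by fun_prop
    simpa using (this.tendsto 1).mono_left nhdsWithin_le_nhds
  have hne : ∀ᶠ r : ℝ≥0 in 𝓝[<] 1, r ≠ 0 :=
    (eventually_ne_nhds one_ne_zero).filter_mono nhdsWithin_le_nhds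
  have : (𝓝[<] (1 : ℝ≥0)).NeBot := nhdsLT_neBot_of_exists_lt ⟨0, one_pos⟩
  obtain ⟨r, ⟨hr₀, hr₁⟩, har⟩ :=
    ((hne.and self_mem_nhdsWithin).and (hpow.eventually_const_le ha)).exists
  exact ⟨r, hr₀, hr₁, har⟩

section AffineIteration

variable {𝕜 E : Type*} [NontriviallyNormedField 𝕜] [SeminormedAddCommGroup E] [NormedSpace 𝕜 E]

theorem exists_seminorm_eventually_map_le {α : Type*} {l : Filter α} {A : α → E →L[𝕜] E}
    {B : E →L[𝕜] E} (hA : Tendsto A l (𝓝 B)) (hB : Tendsto (B ^ ·) atTop (𝓝 0)) :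
    ∃ p : Seminorm 𝕜 E, (∀ x, ‖x‖ ≤ p x) ∧
      ∃ q : ℝ, 0 < q ∧ q < 1 ∧ ∀ᶠ k in l, ∀ x, p (A k x) ≤ q * p x := by
  have hsmall : ∀ᶠ m in atTop, ‖B ^ m‖ < 1 := hB.norm.eventually_lt_const (by simp)
  obtain ⟨m, hBm, hm⟩ := (hsmall.and (eventually_ne_atTop 0)).exists
  obtain ⟨r, hr₀, hr₁, hBr⟩ := exists_nnreal_lt_one_le_pow hBm m
  obtain ⟨q, hrq, hq₁⟩ := exists_between (NNReal.coe_lt_one.2 hr₁)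
  let p := adaptedSeminorm B r m
  let M := ∑ i ∈ Finset.range m, (r : ℝ)⁻¹ ^ i * ‖B ^ i‖
  have hclose : ∀ᶠ k in l, M * ‖A k - B‖ < q - r :=
    ((tendsto_iff_norm_sub_tendsto_zero.1 hA).const_mul M).eventually_lt_const
      (by simpa using hrq)
  refine ⟨p, norm_le_adaptedSeminorm B r hm, q, r.coe_nonneg.trans_lt hrq, hq₁, ?_⟩
  filter_upwards [hclose] with k hk x
  calc p (A k x) = p (B x + (A k - B) x) := by simp
    _ ≤ p (B x) + p ((A k - B) x) := map_add_le_add p _ _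
    _ ≤ r * p x + M * ‖(A k - B) x‖ :=
        add_le_add (adaptedSeminorm_map_le hr₀ hBr x) (adaptedSeminorm_le_mul_norm B r m _)
    _ ≤ r * p x + M * (‖A k - B‖ * p x) := by
        gcongr
        exact (A k - B).le_of_opNorm_le_of_le le_rfl (norm_le_adaptedSeminorm B r hm x)
    _ = (r + M * ‖A k - B‖) * p x := by ring
    _ ≤ q * p x := by gcongr; linarith

theorem convergesLinearly_affine_iteration {A : ℕ → E →L[𝕜] E} {B : E →L[𝕜] E}
    (hA : Tendsto A atTop (𝓝 B)) (hB : Tendsto (B ^ ·) atTop (𝓝 0)) {s x : ℕ → E} {a : E}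
    (ha : ∀ k, A k a + s k = a) (hx : ∀ k, x (k + 1) = A k (x k) + s k) :
    ConvergesLinearly x a := by
  obtain ⟨p, hp, q, hq₀, hq₁, hcontract⟩ := exists_seminorm_eventually_map_le hA hB
  have herror : ∀ k, x (k + 1) - a = A k (x k - a) := fun k => by
    rw [map_sub, hx, eq_sub_of_add_eq (ha k)]
    abel
  refine convergesLinearly_of_eventually_le_mul hp hq₀ hq₁ ?_
  filter_upwards [hcontract] with k hk
  simpa only [herror] using hk (x k - a)

end AffineIteration

theorem tendsto_pow_atTop_nhds_zero_of_spectralRadius_lt_one {A : Type*} [NormedRing A]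
    [NormedAlgebra ℂ A] [CompleteSpace A] {a : A} (ha : spectralRadius ℂ a < 1) :
    Tendsto (a ^ ·) atTop (𝓝 0) := by
  obtain ⟨r, har, hr⟩ := ENNReal.lt_iff_exists_nnreal_btwn.1 ha
  have hroot : ∀ᶠ n : ℕ in atTop, (‖a ^ n‖₊ : ℝ≥0∞) ^ (1 / n : ℝ) < r :=
    (spectrum.pow_nnnorm_pow_one_div_tendsto_nhds_spectralRadius a).eventually_lt_const har
  have hbound : ∀ᶠ n : ℕ in atTop, ‖a ^ n‖ ≤ (r : ℝ) ^ n := by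
    filter_upwards [hroot, eventually_gt_atTop 0] with n hn hpos
    rw [one_div, ENNReal.rpow_inv_lt_iff (by positivity), ENNReal.rpow_natCast] at hn
    exact_mod_cast hn.le
  exact squeeze_zero_norm' hbound
    (tendsto_pow_atTop_nhds_zero_of_lt_one r.coe_nonneg (by exact_mod_cast hr))

section MatrixIteration

variable {ι : Type*} [Fintype ι] [DecidableEq ι]

open scoped Matrix.Norms.Operator in
theorem matrix_tendsto_pow_atTop_nhds_zero_of_norm_spectrum_lt_one {A : Matrix ι ι ℂ}
    (hA : ∀ μ ∈ spectrum ℂ A, ‖μ‖ < 1) : Tendsto (A ^ ·) atTop (𝓝 0) := by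
  cases isEmpty_or_nonempty ι
  · exact tendsto_const_nhds.congr fun _ => Subsingleton.elim _ _
  · have : CompleteSpace (Matrix ι ι ℂ) := FiniteDimensional.complete ℂ _
    refine tendsto_pow_atTop_nhds_zero_of_spectralRadius_lt_one ?_
    exact_mod_cast spectrum.spectralRadius_lt_of_forall_lt A (r := 1) hA

theorem matrix_tendsto_pow_atTop_nhds_zero_of_norm_spectrum_map_lt_one {𝕜 : Type*} [NormedField 𝕜]
    [NormedAlgebra 𝕜 ℂ] {A : Matrix ι ι 𝕜}
    (hA : ∀ μ ∈ spectrum ℂ (A.map (algebraMap 𝕜 ℂ)), ‖μ‖ < 1) :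
    Tendsto (A ^ ·) atTop (𝓝 0) := by
  rw [(algebraMap_isometry 𝕜 ℂ).isUniformInducing.isInducing.matrix_map.tendsto_nhds_iff]
  simpa [Function.comp_def, Matrix.map_pow] using
    matrix_tendsto_pow_atTop_nhds_zero_of_norm_spectrum_lt_one hA

variable {𝕜 : Type*} [RCLike 𝕜]

theorem continuous_toEuclideanCLM :
    Continuous (toEuclideanCLM : Matrix ι ι 𝕜 ≃⋆ₐ[𝕜] _) :=
  (toEuclideanCLM (n := ι) (𝕜 := 𝕜)).toAlgEquiv.toLinearMap.continuous_of_finiteDimensional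

theorem stmt0_general [NormedAlgebra 𝕜 ℂ] (s : ℕ → ι → 𝕜) (R : ℕ → Matrix ι ι 𝕜)
    (Rinf : Matrix ι ι 𝕜)
    (hspec : ∀ μ ∈ spectrum ℂ (Rinf.map (algebraMap 𝕜 ℂ)), ‖μ‖ < 1)
    (hconv : ∀ i j, Tendsto (fun k => R k i j) atTop (𝓝 (Rinf i j)))
    (hfix : ∃ zbar : ι → 𝕜, ∀ k, 1 ≤ k → R k *ᵥ zbar + s k = zbar) :
    ∃ zs : ι → 𝕜,
      (∀ k, 1 ≤ k → R k *ᵥ zs + s k = zs) ∧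
      (∀ zs' : ι → 𝕜, (∀ k, 1 ≤ k → R k *ᵥ zs' + s k = zs') → zs' = zs) ∧
      (∀ z : ℕ → ι → 𝕜, (∀ k, 1 ≤ k → z k = R k *ᵥ z (k - 1) + s k) →
        ConvergesLinearly (fun k => WithLp.toLp 2 (z k)) (WithLp.toLp 2 zs)) := by
  obtain ⟨zs, hzs⟩ := hfix
  have hR : Tendsto (fun k => toEuclideanCLM (𝕜 := 𝕜) (R (k + 1))) atTop
      (𝓝 (toEuclideanCLM (𝕜 := 𝕜) Rinf)) :=
    (continuous_toEuclideanCLM.tendsto Rinf).comp <| (tendsto_add_atTop_iff_nat 1).2 <|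
      tendsto_pi_nhds.2 fun i => tendsto_pi_nhds.2 (hconv i)
  have hpow : Tendsto (toEuclideanCLM (𝕜 := 𝕜) Rinf ^ ·) atTop (𝓝 0) := by
    simpa [Function.comp_def] using (continuous_toEuclideanCLM.tendsto (0 : Matrix ι ι 𝕜)).comp
      (matrix_tendsto_pow_atTop_nhds_zero_of_norm_spectrum_map_lt_one hspec)
  have hlin : ∀ z : ℕ → ι → 𝕜, (∀ k, 1 ≤ k → z k = R k *ᵥ z (k - 1) + s k) →
      ConvergesLinearly (fun k => WithLp.toLp 2 (z k)) (WithLp.toLp 2 zs) := fun z hz =>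
    convergesLinearly_affine_iteration hR hpow (s := fun k => WithLp.toLp 2 (s (k + 1)))
      (fun k => congrArg (WithLp.toLp 2) (hzs (k + 1) k.succ_pos))
      (fun k => congrArg (WithLp.toLp 2) (hz (k + 1) k.succ_pos))
  refine ⟨zs, hzs, fun zs' hzs' => ?_, hlin⟩
  have hconst := hlin (fun _ => zs') fun k hk => (hzs' k hk).symm
  exact WithLp.toLp_injective 2 (tendsto_nhds_unique tendsto_const_nhds hconst.tendsto)

end MatrixIteration

theorem norm2_eq_norm_toLp {d : ℕ} (x : Fin d → ℝ) : norm2 x = ‖WithLp.toLp 2 x‖ := by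
  simp [norm2, EuclideanSpace.norm_eq]

theorem stmt0 (d : ℕ) (hd : 1 ≤ d) (s : Fin d → ℝ)
    (R : ℕ → Matrix (Fin d) (Fin d) ℝ) (Rinf : Matrix (Fin d) (Fin d) ℝ)
    (hspec : ∀ μ ∈ spectrum ℂ (Rinf.map Complex.ofReal), ‖μ‖ < 1)
    (hconv : ∀ i j, Tendsto (fun k => R k i j) atTop (nhds (Rinf i j)))
    (hfix : ∃ zbar : Fin d → ℝ, ∀ k, 1 ≤ k → R k *ᵥ zbar + s = zbar) :
    ∃ zs : Fin d → ℝ,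
      (∀ k, 1 ≤ k → R k *ᵥ zs + s = zs) ∧
      (∀ zs' : Fin d → ℝ, (∀ k, 1 ≤ k → R k *ᵥ zs' + s = zs') → zs' = zs) ∧
      (∀ z : ℕ → (Fin d → ℝ), (∀ k, 1 ≤ k → z k = R k *ᵥ z (k - 1) + s) →
        ∃ C, 0 < C ∧ ∃ β, 0 ≤ β ∧ β < 1 ∧ ∃ K, 1 ≤ K ∧ ∀ k, K ≤ k →
          norm2 (z k - zs) ≤ C * β ^ k) := by
  simpa only [norm2_eq_norm_toLp, WithLp.toLp_sub, ConvergesLinearly] using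
    stmt0_general (fun _ => s) R Rinf hspec hconv hfix
end

section
/- Let P be a real n×n matrix such that every complex eigenvalue of P is real and lies in the interval [0,1). Define the real 2n×2n block matrix R = [[2P, −P], [I_n, 0_n]] (top-left block 2P, top-right block −P, bottom-left block the n×n identity, bottom-right block the n×n zero matrix). Then every complex eigenvalue of R has modulus strictly less than 1. -/
/-!
A number `z` is an eigenvalue of the block matrix exactly when `z² - (2z - 1)P` is singular, so `z`
is a root of `z² - 2μz + μ` for some eigenvalue `μ` of `P`. The Schur–Cohn criterion puts both roots
of this quadratic in the open unit disc once `2|μ||1 - μ| < 1 - |μ|²`, which for real `μ` means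
`-1/3 < μ < 1`.
-/

open Matrix

open scoped ComplexConjugate

section Spectrum

variable {m : Type*} [Fintype m] [DecidableEq m]

theorem mem_spectrum_fromBlocks_one_zero_iff {R : Type*} [CommRing R]
    (A B : Matrix m m R) (z : R) :
    z ∈ spectrum R (fromBlocks A B (1 : Matrix m m R) 0) ↔
      ¬IsUnit (z ^ 2 • (1 : Matrix m m R) - z • A - B) := by
  -- Right multiplication by `U` is a column operation clearing the lower left block.
  let U : Matrix (m ⊕ m) (m ⊕ m) R := fromBlocks (z • 1) 1 1 0
  have hU : IsUnit U :=
    .of_mul_eq_one (fromBlocks 0 1 1 (-(z • 1))) (by simp [U, fromBlocks_multiply])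
  have hmul : (algebraMap R _ z - fromBlocks A B (1 : Matrix m m R) 0) * U =
      fromBlocks (z ^ 2 • 1 - z • A - B) (z • 1 - A) 0 (-1 : Matrix m m R) := by
    rw [Algebra.algebraMap_eq_smul_one, ← fromBlocks_one, fromBlocks_smul, sub_eq_add_neg,
      fromBlocks_neg, fromBlocks_add, fromBlocks_multiply]
    simp [smul_smul, sq, sub_eq_add_neg]
  rw [spectrum.mem_iff, ← hU.mul_right_iff, hmul, isUnit_fromBlocks_zero₂₁]
  simp

theorem mem_spectrum_fromBlocks_two_smul_neg_iff {K : Type*} [Field K] (Q : Matrix m m K) (z : K) :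
    z ∈ spectrum K (fromBlocks ((2 : K) • Q) (-Q) (1 : Matrix m m K) 0) ↔
      ∃ μ ∈ spectrum K Q, z ^ 2 - 2 * μ * z + μ = 0 := by
  have hpencil : z ^ 2 • (1 : Matrix m m K) - z • (2 : K) • Q - -Q =
      algebraMap K _ (z ^ 2) - (2 * z - 1) • Q := by
    rw [Algebra.algebraMap_eq_smul_one]
    module
  rw [mem_spectrum_fromBlocks_one_zero_iff, hpencil, ← spectrum.mem_iff]
  have hroot (μ : K) : z ^ 2 - 2 * μ * z + μ = 0 ↔ (2 * z - 1) * μ = z ^ 2 := by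
    constructor <;> intro h <;> linear_combination -h
  simp only [hroot]
  rcases eq_or_ne (2 * z - 1) 0 with hc | hc
  · -- Neither side can hold: `2z = 1` forces `z² ≠ 0`.
    have hz : z ≠ 0 := by
      rintro rfl
      simp at hc
    have hunit : IsUnit (algebraMap K (Matrix m m K) (z ^ 2)) :=
      (IsUnit.mk0 _ (pow_ne_zero 2 hz)).map _
    simp [hc, hz, -map_pow, spectrum.mem_iff, hunit, eq_comm (a := (0 : K))]
  · let u : Kˣ := Units.mk0 _ hc
    change z ^ 2 ∈ spectrum K (u • Q) ↔ ∃ μ ∈ spectrum K Q, u • μ = z ^ 2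
    rw [spectrum.unit_smul_eq_smul, Set.mem_smul_set]

end Spectrum

theorem map_fromBlocks_two_smul_neg {m R S : Type*} [DecidableEq m] [Ring R] [Ring S]
    (f : R →+* S) (P : Matrix m m R) :
    (fromBlocks ((2 : R) • P) (-P) (1 : Matrix m m R) 0).map f =
      fromBlocks ((2 : S) • P.map f) (-P.map f) 1 0 := by
  simp [fromBlocks_map, map_smul' _ _ _ (map_mul f), map_ofNat f 2, Matrix.map_neg]

theorem sq_one_sub_sq_norm_mul_sub_sq_norm (z w : ℂ) :
    (1 - ‖z * w‖ ^ 2) ^ 2 - ‖(z + w) - conj (z + w) * (z * w)‖ ^ 2 =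
      (1 - ‖z‖ ^ 2) * (1 - ‖w‖ ^ 2) * ‖1 - z * conj w‖ ^ 2 := by
  simp only [← Complex.normSq_eq_norm_sq, Complex.normSq_apply, Complex.add_re, Complex.add_im,
    Complex.sub_re, Complex.sub_im, Complex.mul_re, Complex.mul_im, Complex.conj_re,
    Complex.conj_im, Complex.one_re, Complex.one_im]
  ring

theorem norm_lt_one_of_sq_sub_mul_add_eq_zero {a b z : ℂ} (hab : ‖a - conj a * b‖ < 1 - ‖b‖ ^ 2)
    (hz : z ^ 2 - a * z + b = 0) : ‖z‖ < 1 := by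
  -- `w` is the other root; the identity above puts `‖z‖ - 1` and `‖w‖ - 1` on the same side of `0`.
  obtain ⟨w, rfl⟩ : ∃ w, a = z + w := ⟨a - z, by ring⟩
  obtain rfl : b = z * w := by linear_combination hz
  have hprod : 0 < (1 - ‖z‖ ^ 2) * (1 - ‖w‖ ^ 2) := by
    refine pos_of_mul_pos_left ?_ (sq_nonneg ‖1 - z * conj w‖)
    rw [← sq_one_sub_sq_norm_mul_sub_sq_norm, sub_pos]
    gcongr
  have hzw : ‖z‖ ^ 2 * ‖w‖ ^ 2 < 1 := by
    rw [← mul_pow, ← norm_mul]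
    linarith [norm_nonneg (z + w - conj (z + w) * (z * w))]
  by_contra! hz1
  have hz2 : 1 ≤ ‖z‖ ^ 2 := one_le_pow₀ hz1
  have hw2 : 1 ≤ ‖w‖ ^ 2 := sub_nonpos.mp (neg_of_mul_pos_right hprod (sub_nonpos.mpr hz2)).le
  exact hzw.not_ge (one_le_mul_of_one_le_of_one_le hz2 hw2)

theorem two_mul_norm_mul_norm_one_sub_ofReal_lt {r : ℝ} (hr : -(1 / 3) < r) (hr1 : r < 1) :
    2 * ‖(r : ℂ)‖ * ‖1 - (r : ℂ)‖ < 1 - ‖(r : ℂ)‖ ^ 2 := by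
  have habs : 2 * |r| < 1 + r := by
    cases abs_cases r <;> linarith
  have hsub : ‖1 - (r : ℂ)‖ = 1 - r := by
    rw [← Complex.ofReal_one, ← Complex.ofReal_sub, Complex.norm_of_nonneg (sub_pos.mpr hr1).le]
  rw [hsub, Complex.norm_real, Real.norm_eq_abs]
  calc 2 * |r| * (1 - r) < (1 + r) * (1 - r) := by gcongr
    _ = 1 - |r| ^ 2 := by rw [sq_abs]; ring

theorem stmt1_general {m : Type*} [Fintype m] [DecidableEq m] (Q : Matrix m m ℂ)
    (hQ : ∀ μ ∈ spectrum ℂ Q, 2 * ‖μ‖ * ‖1 - μ‖ < 1 - ‖μ‖ ^ 2) :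
    ∀ z ∈ spectrum ℂ (fromBlocks ((2 : ℂ) • Q) (-Q) (1 : Matrix m m ℂ) 0), ‖z‖ < 1 := by
  intro z hz
  obtain ⟨μ, hμ, hroot⟩ := (mem_spectrum_fromBlocks_two_smul_neg_iff Q z).mp hz
  refine norm_lt_one_of_sq_sub_mul_add_eq_zero ?_ hroot
  calc ‖2 * μ - conj (2 * μ) * μ‖ = ‖2 * μ * conj (1 - μ)‖ := by
        congr 1
        simp only [map_mul, map_sub, map_one, Complex.conj_ofNat]
        ring
    _ = 2 * ‖μ‖ * ‖1 - μ‖ := by simp only [norm_mul, RCLike.norm_conj, Complex.norm_ofNat]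
    _ < 1 - ‖μ‖ ^ 2 := hQ μ hμ

theorem stmt1 (n : ℕ) (P : Matrix (Fin n) (Fin n) ℝ)
    (hP : ∀ μ ∈ spectrum ℂ (P.map Complex.ofReal), ∃ r : ℝ, μ = (r : ℂ) ∧ 0 ≤ r ∧ r < 1) :
    ∀ lam ∈ spectrum ℂ
      ((Matrix.fromBlocks ((2 : ℝ) • P) (-P)
        (1 : Matrix (Fin n) (Fin n) ℝ) (0 : Matrix (Fin n) (Fin n) ℝ)).map Complex.ofReal),
      ‖lam‖ < 1 := by
  refine map_fromBlocks_two_smul_neg Complex.ofRealHom P ▸ stmt1_general _ fun μ hμ => ?_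
  obtain ⟨r, rfl, hr, hr1⟩ := hP μ hμ
  exact two_mul_norm_mul_norm_one_sub_ofReal_lt (by linarith) hr1
end

section
/- Let W be a real symmetric n×n matrix all of whose eigenvalues lie in [0,1], let A be a nonzero real m×n matrix, and suppose ker(A) ∩ fix(W) = {0}. Then for every γ with 0 < γ < 1/λ_max(AᵀA), every complex eigenvalue of the matrix P_γ = W(I_n − γAᵀA) is real and lies in the interval [0,1). -/
open Matrix

/-- The largest eigenvalue of a real (symmetric) matrix, as the supremum of its real
spectrum. -/
noncomputable def lamMax {n : ℕ} (S : Matrix (Fin n) (Fin n) ℝ) : ℝ := sSup (spectrum ℝ S)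

/-!
Put `B = 1 - γ AᴴA`, so that `W` and `B` both lie between `0` and `1` in the Loewner order and
`ker A = fix B`. The product `W * B` has the characteristic polynomial of the positive semidefinite
matrix `√W * B * √W`, so its eigenvalues in any extension field are real and nonnegative. If
`W B x = r x` with `r ≥ 1`, then `‖x‖ ≤ ‖W B x‖ ≤ ‖B x‖ ≤ ‖x‖`; a matrix `T` with `0 ≤ T ≤ 1`
preserves the norm of `x` only if `T x = x`, so `x` is fixed by `B` and by `W` and therefore
vanishes.
-/

section Spectrum

variable {F K n : Type*} [Field F] [Field K] [Fintype n] [DecidableEq n] {M : Matrix n n F}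

theorem exists_mem_spectrum_of_mem_spectrum_map (hM : M.charpoly.Splits) (f : F →+* K) {μ : K}
    (hμ : μ ∈ spectrum K (M.map f)) : ∃ t ∈ spectrum F M, f t = μ := by
  rw [mem_spectrum_iff_isRoot_charpoly, charpoly_map,
    ← Polynomial.mem_roots (M.charpoly_monic.map f).ne_zero, hM.roots_map f,
    Multiset.mem_map] at hμ
  obtain ⟨t, ht, rfl⟩ := hμ
  exact ⟨t, mem_spectrum_iff_isRoot_charpoly.mpr (Polynomial.isRoot_of_mem_roots ht), rfl⟩

theorem exists_mulVec_eq_smul_of_mem_spectrum {t : F} (ht : t ∈ spectrum F M) :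
    ∃ x ≠ 0, M *ᵥ x = t • x := by
  rw [← spectrum_toLin', ← Module.End.hasEigenvalue_iff_mem_spectrum] at ht
  obtain ⟨x, hx⟩ := ht.exists_hasEigenvector
  exact ⟨x, hx.2, hx.apply_eq_smul⟩

end Spectrum

theorem mul_self_le_self_of_mem_Icc {R : Type*} [Ring R] [StarRing R] [PartialOrder R]
    [StarOrderedRing R] {a : R} (ha : a ∈ Set.Icc 0 1) : a * a ≤ a := by
  have ha' : 0 ≤ 1 - a := sub_nonneg.mpr ha.2
  have key : a - a * a = a * (1 - a) * a + (1 - a) * a * (1 - a) := by noncomm_ring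
  rw [← sub_nonneg, key]
  exact add_nonneg (conjugate_nonneg_of_nonneg ha' ha.1) (conjugate_nonneg_of_nonneg ha.1 ha')

section Loewner

open scoped ComplexOrder MatrixOrder

variable {𝕜 n : Type*} [RCLike 𝕜] [Fintype n]

theorem star_dotProduct_mulVec_mono {S T : Matrix n n 𝕜} (h : S ≤ T) (x : n → 𝕜) :
    star x ⬝ᵥ S *ᵥ x ≤ star x ⬝ᵥ T *ᵥ x := by
  have := (le_iff.mp h).dotProduct_mulVec_nonneg x
  rwa [sub_mulVec, dotProduct_sub, sub_nonneg] at this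

theorem star_dotProduct_self_le_star_smul_dotProduct_smul {c : 𝕜} (hc : 1 ≤ ‖c‖) (x : n → 𝕜) :
    star x ⬝ᵥ x ≤ star (c • x) ⬝ᵥ (c • x) := by
  have hc2 : (1 : 𝕜) ≤ (‖c‖ : 𝕜) ^ 2 := by exact_mod_cast one_le_pow₀ hc
  have key : star (c • x) ⬝ᵥ (c • x) = (‖c‖ : 𝕜) ^ 2 * (star x ⬝ᵥ x) := by
    rw [star_smul, smul_dotProduct, dotProduct_smul, smul_smul, RCLike.star_def, RCLike.conj_mul,
      smul_eq_mul]
  rw [key]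
  exact le_mul_of_one_le_left (dotProduct_star_self_nonneg x) hc2

variable [DecidableEq n]

section Contraction

variable {T : Matrix n n 𝕜} (hT : T ∈ Set.Icc 0 1) {x : n → 𝕜}

include hT

theorem star_mulVec_dotProduct_mulVec_le_star_dotProduct_mulVec :
    star (T *ᵥ x) ⬝ᵥ T *ᵥ x ≤ star x ⬝ᵥ T *ᵥ x := by
  have hTH : Tᴴ = T := hT.1.posSemidef.isHermitian
  simpa only [star_mulVec, hTH, dotProduct_mulVec, vecMul_vecMul] using
    star_dotProduct_mulVec_mono (mul_self_le_self_of_mem_Icc hT) x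

theorem star_mulVec_dotProduct_mulVec_le : star (T *ᵥ x) ⬝ᵥ T *ᵥ x ≤ star x ⬝ᵥ x :=
  calc
    star (T *ᵥ x) ⬝ᵥ T *ᵥ x ≤ star x ⬝ᵥ T *ᵥ x :=
      star_mulVec_dotProduct_mulVec_le_star_dotProduct_mulVec hT
    _ ≤ star x ⬝ᵥ x := by simpa only [one_mulVec] using star_dotProduct_mulVec_mono hT.2 x

theorem mulVec_eq_self_of_le_star_mulVec_dotProduct_mulVec
    (hx : star x ⬝ᵥ x ≤ star (T *ᵥ x) ⬝ᵥ T *ᵥ x) : T *ᵥ x = x := by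
  have hpos : (1 - T).PosSemidef := le_iff.mp hT.2
  have hle : star x ⬝ᵥ (1 - T) *ᵥ x ≤ 0 := by
    rw [sub_mulVec, one_mulVec, dotProduct_sub, sub_nonpos]
    exact hx.trans (star_mulVec_dotProduct_mulVec_le_star_dotProduct_mulVec hT)
  have hzero : (1 - T) *ᵥ x = 0 :=
    (hpos.dotProduct_mulVec_zero_iff x).mp (hle.antisymm (hpos.dotProduct_mulVec_nonneg x))
  rwa [sub_mulVec, one_mulVec, sub_eq_zero, eq_comm] at hzero

end Contraction

theorem one_sub_smul_mem_Icc {S : Matrix n n 𝕜} (hS : 0 ≤ S) {γ : ℝ} (hγ : 0 ≤ γ)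
    (hγS : γ * sSup (spectrum ℝ S) ≤ 1) : 1 - γ • S ∈ Set.Icc 0 1 := by
  have hS_le : S ≤ algebraMap ℝ _ (sSup (spectrum ℝ S)) :=
    le_algebraMap_of_spectrum_le fun _ ht ↦ le_csSup finite_real_spectrum.bddAbove ht
  refine ⟨sub_nonneg.mpr ?_, sub_le_self _ (smul_nonneg hγ hS)⟩
  calc
    γ • S ≤ γ • algebraMap ℝ _ (sSup (spectrum ℝ S)) := smul_le_smul_of_nonneg_left hS_le hγ
    _ = (γ * sSup (spectrum ℝ S)) • 1 := by rw [Algebra.algebraMap_eq_smul_one, smul_smul]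
    _ ≤ (1 : ℝ) • 1 := smul_le_smul_of_nonneg_right hγS zero_le_one
    _ = 1 := one_smul ℝ 1

variable {W B : Matrix n n 𝕜}

theorem exists_posSemidef_charpoly_mul_eq (hW : 0 ≤ W) (hB : 0 ≤ B) :
    ∃ C : Matrix n n 𝕜, C.PosSemidef ∧ (W * B).charpoly = C.charpoly := by
  refine ⟨CFC.sqrt W * B * CFC.sqrt W,
    (conjugate_nonneg_of_nonneg hB (CFC.sqrt_nonneg W)).posSemidef, ?_⟩
  conv_lhs => rw [← CFC.sqrt_mul_sqrt_self W hW, mul_assoc, charpoly_mul_comm]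

theorem splits_charpoly_mul (hW : 0 ≤ W) (hB : 0 ≤ B) : (W * B).charpoly.Splits := by
  obtain ⟨C, hC, hcharpoly⟩ := exists_posSemidef_charpoly_mul_eq hW hB
  exact hcharpoly ▸ hC.isHermitian.splits_charpoly

theorem nonneg_of_mem_spectrum_mul (hW : 0 ≤ W) (hB : 0 ≤ B) {t : 𝕜}
    (ht : t ∈ spectrum 𝕜 (W * B)) : 0 ≤ t := by
  obtain ⟨C, hC, hcharpoly⟩ := exists_posSemidef_charpoly_mul_eq hW hB
  rw [mem_spectrum_iff_isRoot_charpoly, hcharpoly, ← mem_spectrum_iff_isRoot_charpoly] at ht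
  exact (posSemidef_iff_isHermitian_and_spectrum_nonneg.mp hC).2 ht

theorem mulVec_eq_self_of_le_star_mul_mulVec_dotProduct (hW : W ∈ Set.Icc 0 1)
    (hB : B ∈ Set.Icc 0 1) {x : n → 𝕜}
    (hx : star x ⬝ᵥ x ≤ star ((W * B) *ᵥ x) ⬝ᵥ (W * B) *ᵥ x) : W *ᵥ x = x ∧ B *ᵥ x = x := by
  rw [← mulVec_mulVec] at hx
  have hBx : B *ᵥ x = x := mulVec_eq_self_of_le_star_mulVec_dotProduct_mulVec hB
    (hx.trans (star_mulVec_dotProduct_mulVec_le hW))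
  rw [hBx] at hx
  exact ⟨mulVec_eq_self_of_le_star_mulVec_dotProduct_mulVec hW hx, hBx⟩

theorem exists_ofReal_of_mem_spectrum_mul (hW : W ∈ Set.Icc 0 1) (hB : B ∈ Set.Icc 0 1)
    (hfix : ∀ x : n → 𝕜, W *ᵥ x = x → B *ᵥ x = x → x = 0) {t : 𝕜}
    (ht : t ∈ spectrum 𝕜 (W * B)) : ∃ r : ℝ, t = r ∧ 0 ≤ r ∧ r < 1 := by
  obtain ⟨r, hr, rfl⟩ := RCLike.nonneg_iff_exists_ofReal.mp
    (nonneg_of_mem_spectrum_mul hW.1 hB.1 ht)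
  refine ⟨r, rfl, hr, ?_⟩
  by_contra! hr1
  have hnorm : 1 ≤ ‖(r : 𝕜)‖ := by rwa [RCLike.norm_of_nonneg hr]
  obtain ⟨x, hx0, hx⟩ := exists_mulVec_eq_smul_of_mem_spectrum ht
  obtain ⟨hWx, hBx⟩ := mulVec_eq_self_of_le_star_mul_mulVec_dotProduct hW hB
    (hx ▸ star_dotProduct_self_le_star_smul_dotProduct_smul hnorm x)
  exact hx0 (hfix x hWx hBx)

theorem one_sub_smul_conjTranspose_mul_self_mulVec_eq_self_iff {m : Type*} [Fintype m]
    (A : Matrix m n 𝕜) {γ : ℝ} (hγ : γ ≠ 0) (x : n → 𝕜) :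
    (1 - γ • (Aᴴ * A)) *ᵥ x = x ↔ A *ᵥ x = 0 := by
  rw [sub_mulVec, one_mulVec, sub_eq_self, smul_mulVec, smul_eq_zero_iff_right hγ,
    conjTranspose_mul_self_mulVec_eq_zero]

theorem stmt7_general {K m : Type*} [Field K] [Fintype m] (f : 𝕜 →+* K) (W : Matrix n n 𝕜)
    (A : Matrix m n 𝕜) (hW : W.PosSemidef) (hW1 : (1 - W).PosSemidef)
    (hker : ∀ x : n → 𝕜, A *ᵥ x = 0 → W *ᵥ x = x → x = 0)
    (γ : ℝ) (hγ0 : 0 < γ) (hγ1 : γ * sSup (spectrum ℝ (Aᴴ * A)) ≤ 1) :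
    ∀ μ ∈ spectrum K ((W * (1 - γ • (Aᴴ * A))).map f),
      ∃ r : ℝ, μ = f r ∧ 0 ≤ r ∧ r < 1 := by
  intro μ hμ
  have hWmem : W ∈ Set.Icc 0 1 := ⟨hW.nonneg, hW1⟩
  have hBmem : 1 - γ • (Aᴴ * A) ∈ Set.Icc 0 1 :=
    one_sub_smul_mem_Icc (posSemidef_conjTranspose_mul_self A).nonneg hγ0.le hγ1
  obtain ⟨t, ht, rfl⟩ := exists_mem_spectrum_of_mem_spectrum_map
    (splits_charpoly_mul hWmem.1 hBmem.1) f hμ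
  obtain ⟨r, rfl, hr⟩ := exists_ofReal_of_mem_spectrum_mul hWmem hBmem (fun x hWx hBx ↦
    hker x ((one_sub_smul_conjTranspose_mul_self_mulVec_eq_self_iff A hγ0.ne' x).mp hBx) hWx) ht
  exact ⟨r, rfl, hr⟩

end Loewner

theorem stmt7 (n m : ℕ) (W : Matrix (Fin n) (Fin n) ℝ) (A : Matrix (Fin m) (Fin n) ℝ)
    (hW : W.PosSemidef) (hW1 : ((1 : Matrix (Fin n) (Fin n) ℝ) - W).PosSemidef)
    (hA : A ≠ 0)
    (hker : ∀ x : Fin n → ℝ, A *ᵥ x = 0 → W *ᵥ x = x → x = 0)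
    (γ : ℝ) (hγ0 : 0 < γ) (hγ1 : γ < 1 / lamMax (Aᵀ * A)) :
    ∀ μ ∈ spectrum ℂ ((W * (1 - γ • (Aᵀ * A))).map Complex.ofReal),
      ∃ r : ℝ, μ = (r : ℂ) ∧ 0 ≤ r ∧ r < 1 :=
  stmt7_general Complex.ofRealHom W A hW hW1 hker γ hγ0
    ((lt_div_iff₀ (one_div_pos.mp (hγ0.trans hγ1))).mp hγ1).le
end

section
/- Let W be a real symmetric n×n matrix all of whose eigenvalues lie in [0,1], let A be a real m×n matrix, and suppose ker(A) ∩ fix(W) = {0}. Then for every μ > 0 and every θ ∈ (0,1], the matrix I_n + μAᵀA is invertible and every complex eigenvalue of P_{μ,θ} = (I_n + μAᵀA)^{−1}(θW + (1−θ)I_n) is real and lies in the interval [0,1). -/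
open Matrix

/-!
Write `M = I + μ AᴴA` and `V = θ W + (1 - θ) I`. An eigenvector `x` of `M⁻¹ V` with eigenvalue `c`
satisfies `V x = c M x`, so `c` is the generalized Rayleigh quotient `x⋆Vx / x⋆Mx`, whatever the
field of scalars. It is real and nonnegative because `V` is positive semidefinite, and less than `1`
because `M - V = θ (I - W) + μ AᴴA` is positive definite: a vector on which both semidefinite
summands vanish lies in `ker A ∩ fix W`. For real matrices this definiteness is established over `ℝ`
and then transported to `ℂ`.
-/

section

open scoped ComplexOrder

variable {ι κ 𝕜 L F : Type*} [RCLike 𝕜] [RCLike L] [FunLike F 𝕜 L] [RingHomClass F 𝕜 L]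
  [StarHomClass F 𝕜 L] (f : F)

open scoped MatrixOrder in
lemma posSemidef_map [Finite ι] {M : Matrix ι ι 𝕜} (hM : M.PosSemidef) : (M.map f).PosSemidef := by
  classical
  cases nonempty_fintype ι
  obtain ⟨B, rfl⟩ := CStarAlgebra.nonneg_iff_eq_star_mul_self.mp hM.nonneg
  rw [star_eq_conjTranspose, Matrix.map_mul, conjTranspose_map f (map_star f)]
  exact posSemidef_conjTranspose_mul_self _

lemma posDef_map [Finite ι] {M : Matrix ι ι 𝕜} (hM : M.PosDef) : (M.map f).PosDef := by
  classical
  cases nonempty_fintype ι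
  exact (posSemidef_map f hM.posSemidef).posDef_iff_isUnit.mpr
    (hM.isUnit.map (f : 𝕜 →+* L).mapMatrix)

variable [Fintype ι] [Fintype κ]

lemma exists_mulVec_eq_smul_of_mem_spectrum_s8 {K : Type*} [Field K] [DecidableEq ι]
    {P : Matrix ι ι K} {c : K} (hc : c ∈ spectrum K P) : ∃ x ≠ 0, P *ᵥ x = c • x := by
  rw [← spectrum_toLin'] at hc
  obtain ⟨x, hx⟩ := (Module.End.HasEigenvalue.of_mem_spectrum hc).exists_hasEigenvector
  exact ⟨x, hx.2, by simpa only [toLin'_apply] using hx.apply_eq_smul⟩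

lemma spectrum_subset_Ico_of_posDef_mul_eq [DecidableEq ι] {M V P : Matrix ι ι 𝕜}
    (hM : M.PosDef) (hV : V.PosSemidef) (hMV : (M - V).PosDef) (hP : M * P = V) :
    spectrum 𝕜 P ⊆ Set.Ico 0 1 := by
  intro c hc
  obtain ⟨x, hx₀, hx⟩ := exists_mulVec_eq_smul_of_mem_spectrum_s8 hc
  have hM_pos : 0 < star x ⬝ᵥ M *ᵥ x := hM.dotProduct_mulVec_pos hx₀
  have hV_eq : star x ⬝ᵥ V *ᵥ x = c * (star x ⬝ᵥ M *ᵥ x) := by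
    rw [← hP, ← mulVec_mulVec, hx, mulVec_smul, dotProduct_smul, smul_eq_mul]
  have hV_nonneg : 0 * (star x ⬝ᵥ M *ᵥ x) ≤ c * (star x ⬝ᵥ M *ᵥ x) := by
    rw [zero_mul, ← hV_eq]
    exact hV.dotProduct_mulVec_nonneg x
  have hV_lt : c * (star x ⬝ᵥ M *ᵥ x) < 1 * (star x ⬝ᵥ M *ᵥ x) := by
    rw [one_mul, ← hV_eq, ← sub_pos, ← dotProduct_sub, ← sub_mulVec]
    exact hMV.dotProduct_mulVec_pos hx₀
  exact ⟨le_of_mul_le_mul_right hV_nonneg hM_pos, lt_of_mul_lt_mul_right hV_lt hM_pos.le⟩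

lemma posDef_add_of_forall_mulVec_eq_zero {B C : Matrix ι ι 𝕜} (hB : B.PosSemidef)
    (hC : C.PosSemidef) (hker : ∀ x, B *ᵥ x = 0 → C *ᵥ x = 0 → x = 0) : (B + C).PosDef := by
  refine .of_dotProduct_mulVec_pos (hB.add hC).isHermitian fun x hx ↦ ?_
  have hBx := hB.dotProduct_mulVec_nonneg x
  have hCx := hC.dotProduct_mulVec_nonneg x
  rw [add_mulVec, dotProduct_add]
  refine (add_nonneg hBx hCx).lt_of_ne' fun h ↦ hx ?_
  rw [add_eq_zero_iff_of_nonneg hBx hCx, hB.dotProduct_mulVec_zero_iff,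
    hC.dotProduct_mulVec_zero_iff] at h
  exact hker x h.1 h.2

lemma posDef_smul_one_sub_add_smul_conjTranspose_mul_self [DecidableEq ι] {W : Matrix ι ι 𝕜}
    {A : Matrix κ ι 𝕜} (hW : (1 - W).PosSemidef)
    (hker : ∀ x, A *ᵥ x = 0 → W *ᵥ x = x → x = 0) {μ θ : ℝ} (hμ : 0 < μ) (hθ : 0 < θ) :
    (θ • (1 - W) + μ • (Aᴴ * A)).PosDef := by
  refine posDef_add_of_forall_mulVec_eq_zero (hW.smul hθ.le)
    ((posSemidef_conjTranspose_mul_self A).smul hμ.le) fun x hWx hAx ↦ hker x ?_ ?_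
  · rwa [smul_mulVec, smul_eq_zero_iff_right hμ.ne', conjTranspose_mul_self_mulVec_eq_zero] at hAx
  · rw [smul_mulVec, smul_eq_zero_iff_right hθ.ne', sub_mulVec, one_mulVec, sub_eq_zero] at hWx
    exact hWx.symm

lemma spectrum_map_inv_mul_subset_Ico [DecidableEq ι] {M V : Matrix ι ι 𝕜} (hM : M.PosDef)
    (hV : V.PosSemidef) (hMV : (M - V).PosDef) :
    spectrum L ((M⁻¹ * V).map f) ⊆ Set.Ico 0 1 := by
  refine spectrum_subset_Ico_of_posDef_mul_eq (posDef_map f hM) (posSemidef_map f hV) ?_ ?_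
  · rw [← Matrix.map_sub f (map_sub f)]
    exact posDef_map f hMV
  · rw [← Matrix.map_mul, mul_nonsing_inv_cancel_left _ _ ((isUnit_iff_isUnit_det _).1 hM.isUnit)]

theorem stmt8_general [DecidableEq ι] (φ : 𝕜 →⋆ₐ[ℝ] ℂ) (W : Matrix ι ι 𝕜) (A : Matrix κ ι 𝕜)
    (hW : W.PosSemidef) (hW1 : (1 - W).PosSemidef)
    (hker : ∀ x : ι → 𝕜, A *ᵥ x = 0 → W *ᵥ x = x → x = 0)
    (μ θ : ℝ) (hμ : 0 < μ) (hθ0 : 0 < θ) (hθ1 : θ ≤ 1) :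
    IsUnit (1 + μ • (Aᴴ * A)) ∧
    ∀ c ∈ spectrum ℂ (((1 + μ • (Aᴴ * A))⁻¹ * (θ • W + (1 - θ) • (1 : Matrix ι ι 𝕜))).map φ),
      ∃ r : ℝ, c = (r : ℂ) ∧ 0 ≤ r ∧ r < 1 := by
  have hM : (1 + μ • (Aᴴ * A)).PosDef :=
    PosDef.one.add_posSemidef ((posSemidef_conjTranspose_mul_self A).smul hμ.le)
  have hV : (θ • W + (1 - θ) • (1 : Matrix ι ι 𝕜)).PosSemidef :=
    (hW.smul hθ0.le).add (PosSemidef.one.smul (sub_nonneg.2 hθ1))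
  have hMV : (1 + μ • (Aᴴ * A) - (θ • W + (1 - θ) • (1 : Matrix ι ι 𝕜))).PosDef := by
    convert posDef_smul_one_sub_add_smul_conjTranspose_mul_self hW1 hker hμ hθ0 using 1
    module
  refine ⟨hM.isUnit, fun c hc ↦ ?_⟩
  obtain ⟨hc₀, hc₁⟩ := spectrum_map_inv_mul_subset_Ico φ hM hV hMV hc
  obtain ⟨r, hr, rfl⟩ := RCLike.nonneg_iff_exists_ofReal.mp hc₀
  exact ⟨r, rfl, hr, (Complex.lt_def.1 hc₁).1⟩

end

theorem stmt8 (n m : ℕ) (W : Matrix (Fin n) (Fin n) ℝ) (A : Matrix (Fin m) (Fin n) ℝ)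
    (hW : W.PosSemidef) (hW1 : ((1 : Matrix (Fin n) (Fin n) ℝ) - W).PosSemidef)
    (hker : ∀ x : Fin n → ℝ, A *ᵥ x = 0 → W *ᵥ x = x → x = 0)
    (μ θ : ℝ) (hμ : 0 < μ) (hθ0 : 0 < θ) (hθ1 : θ ≤ 1) :
    IsUnit ((1 : Matrix (Fin n) (Fin n) ℝ) + μ • (Aᵀ * A)) ∧
    ∀ lam ∈ spectrum ℂ
      ((((1 : Matrix (Fin n) (Fin n) ℝ) + μ • (Aᵀ * A))⁻¹ *
        (θ • W + (1 - θ) • (1 : Matrix (Fin n) (Fin n) ℝ))).map Complex.ofReal),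
      ∃ r : ℝ, lam = (r : ℂ) ∧ 0 ≤ r ∧ r < 1 := by
  rw [← conjTranspose_eq_transpose_of_trivial]
  exact stmt8_general (StarAlgHom.ofId ℝ ℂ) W A hW hW1 hker μ θ hμ hθ0 hθ1
end

section
/- Let K be a real n×n matrix that is symmetric positive semidefinite, entrywise nonnegative, irreducible, and has K_{ii} > 0 for all 1 ≤ i ≤ n. Let D = diag(K𝟙) be the diagonal matrix whose i-th diagonal entry is the i-th row sum of K. Then every diagonal entry of D is strictly positive (so W := D^{−1}K is well-defined), W is stochastic and irreducible, and every complex eigenvalue of W is real and lies in the interval [0,1]. -/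
open Matrix

/-!
With `D` the diagonal matrix of row sums, `W = D⁻¹ * K` is row-stochastic, so Gershgorin's theorem
puts its spectrum in the closed unit disc. It is also a product of two positive semidefinite
matrices; writing `D⁻¹ = Cᴴ * C`, the nonzero spectrum of `Cᴴ * (C * K)` is that of the positive
semidefinite matrix `(C * K) * Cᴴ`, hence real and nonnegative. Irreducibility of `K` passes to `W`
because it only depends on the positions of the positive entries.
-/

section Irreducible

variable {ι R : Type*} [Ring R] [LinearOrder R] {A : Matrix ι ι R}

theorem exists_pos_of_isIrreducible (hA : A.IsIrreducible) (i : ι) : ∃ j, 0 < A i j := by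
  -- The last edge of a cycle through `i` in the graph of `Aᵀ` is an edge of `A` starting at `i`.
  let : Quiver ι := Aᵀ.toQuiver
  obtain ⟨p, hp⟩ := hA.transpose.connected i i
  cases p with
  | nil => simp at hp
  | cons _ e => exact ⟨_, e.down⟩

theorem mulVec_one_pos_of_isIrreducible [Fintype ι] [IsOrderedAddMonoid R]
    (hA : A.IsIrreducible) (i : ι) : 0 < (A *ᵥ 1) i := by
  obtain ⟨j, hj⟩ := exists_pos_of_isIrreducible hA i
  rw [mulVec, dotProduct_one]
  exact Finset.sum_pos' (fun j _ ↦ hA.nonneg i j) ⟨j, Finset.mem_univ j, hj⟩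

theorem isIrreducible_diagonal_mul_iff [Fintype ι] [DecidableEq ι] [IsStrictOrderedRing R]
    {d : ι → R} (hd : ∀ i, 0 < d i) : (diagonal d * A).IsIrreducible ↔ A.IsIrreducible := by
  have quiver_eq : (diagonal d * A).toQuiver = A.toQuiver := by
    simp only [toQuiver, diagonal_mul, mul_pos_iff_of_pos_left (hd _)]
  rw [isIrreducible_iff, isIrreducible_iff, quiver_eq]
  simp only [diagonal_mul, mul_nonneg_iff_of_pos_left (hd _)]

end Irreducible

section Diagonal

variable {ι F : Type*} [Fintype ι] [DecidableEq ι] [Field F]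

theorem inv_diagonal_of_ne_zero {d : ι → F} (hd : ∀ i, d i ≠ 0) :
    (diagonal d)⁻¹ = diagonal d⁻¹ :=
  inv_eq_left_inv <| by simp [hd]

theorem diagonal_inv_mul_mem_rowStochastic [LinearOrder F] [IsStrictOrderedRing F]
    {A : Matrix ι ι F} (hA : ∀ i j, 0 ≤ A i j) (hpos : ∀ i, 0 < (A *ᵥ 1) i) :
    diagonal (A *ᵥ 1)⁻¹ * A ∈ rowStochastic F ι := by
  refine mem_rowStochastic.2 ⟨fun i j ↦ ?_, funext fun i ↦ ?_⟩
  · rw [diagonal_mul]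
    exact mul_nonneg (inv_nonneg.2 (hpos i).le) (hA i j)
  · rw [← mulVec_mulVec, mulVec_diagonal]
    exact inv_mul_cancel₀ (hpos i).ne'

end Diagonal

section Spectrum

open scoped ComplexOrder MatrixOrder

theorem posSemidef_map_ofReal {ι 𝕜 : Type*} [Finite ι] [RCLike 𝕜] {A : Matrix ι ι ℝ}
    (hA : A.PosSemidef) : (A.map ((↑) : ℝ → 𝕜)).PosSemidef := by
  classical
  have := Fintype.ofFinite ι
  obtain ⟨B, rfl⟩ := CStarAlgebra.nonneg_iff_eq_star_mul_self.1 hA.nonneg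
  have map_eq : (star B * B).map ((↑) : ℝ → 𝕜) = (B.map (↑))ᴴ * B.map (↑) := by
    ext i j
    simp [mul_apply]
  rw [map_eq]
  exact posSemidef_conjTranspose_mul_self _

variable {ι 𝕜 : Type*} [Fintype ι] [DecidableEq ι]

theorem exists_norm_le_sum_norm_row_of_mem_spectrum [NormedField 𝕜] {A : Matrix ι ι 𝕜} {μ : 𝕜}
    (hμ : μ ∈ spectrum 𝕜 A) : ∃ i, ‖μ‖ ≤ ∑ j, ‖A i j‖ := by
  rw [← spectrum_toLin', ← Module.End.hasEigenvalue_iff_mem_spectrum] at hμ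
  obtain ⟨i, hi⟩ := eigenvalue_mem_ball hμ
  refine ⟨i, ?_⟩
  calc ‖μ‖ ≤ ‖A i i‖ + ‖μ - A i i‖ := norm_le_norm_add_norm_sub' μ (A i i)
    _ ≤ ‖A i i‖ + ∑ j ∈ Finset.univ.erase i, ‖A i j‖ := by
      gcongr
      exact mem_closedBall_iff_norm.1 hi
    _ = ∑ j, ‖A i j‖ := Finset.add_sum_erase _ (‖A i ·‖) (Finset.mem_univ i)

variable [RCLike 𝕜]

theorem norm_le_one_of_mem_spectrum_map_of_mem_rowStochastic {W : Matrix ι ι ℝ}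
    (hW : W ∈ rowStochastic ℝ ι) {μ : 𝕜} (hμ : μ ∈ spectrum 𝕜 (W.map ((↑) : ℝ → 𝕜))) :
    ‖μ‖ ≤ 1 := by
  obtain ⟨i, hi⟩ := exists_norm_le_sum_norm_row_of_mem_spectrum hμ
  calc ‖μ‖ ≤ ∑ j, ‖(W i j : 𝕜)‖ := hi
    _ = ∑ j, W i j := by simp only [RCLike.norm_of_nonneg (nonneg_of_mem_rowStochastic hW)]
    _ = 1 := sum_row_of_mem_rowStochastic hW i

theorem nonneg_of_mem_spectrum_mul_of_posSemidef {A B : Matrix ι ι 𝕜} (hA : A.PosSemidef)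
    (hB : B.PosSemidef) {μ : 𝕜} (hμ : μ ∈ spectrum 𝕜 (A * B)) : 0 ≤ μ := by
  obtain rfl | hμ₀ := eq_or_ne μ 0
  · exact le_rfl
  obtain ⟨C, rfl⟩ := CStarAlgebra.nonneg_iff_eq_star_mul_self.1 hA.nonneg
  have hμ' : μ ∈ spectrum 𝕜 (C * B * Cᴴ) \ {0} := by
    rw [spectrum.nonzero_mul_comm, ← mul_assoc]
    exact ⟨hμ, hμ₀⟩
  exact (posSemidef_iff_isHermitian_and_spectrum_nonneg.1 (hB.mul_mul_conjTranspose_same C)).2 hμ'.1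

theorem exists_mem_Icc_of_mem_spectrum_map_mul {A B : Matrix ι ι ℝ} (hA : A.PosSemidef)
    (hB : B.PosSemidef) (hAB : A * B ∈ rowStochastic ℝ ι) {μ : 𝕜}
    (hμ : μ ∈ spectrum 𝕜 ((A * B).map ((↑) : ℝ → 𝕜))) : ∃ r ∈ Set.Icc (0 : ℝ) 1, μ = r := by
  have norm_le : ‖μ‖ ≤ 1 := norm_le_one_of_mem_spectrum_map_of_mem_rowStochastic hAB hμ
  have map_eq : (A * B).map ((↑) : ℝ → 𝕜) = A.map (↑) * B.map (↑) :=
    Matrix.map_mul (f := algebraMap ℝ 𝕜)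
  rw [map_eq] at hμ
  have nonneg : 0 ≤ μ := nonneg_of_mem_spectrum_mul_of_posSemidef
    (posSemidef_map_ofReal hA) (posSemidef_map_ofReal hB) hμ
  obtain ⟨r, hr, rfl⟩ := RCLike.nonneg_iff_exists_ofReal.1 nonneg
  rw [RCLike.norm_of_nonneg hr] at norm_le
  exact ⟨r, ⟨hr, norm_le⟩, rfl⟩

end Spectrum

theorem stmt13_general {ι : Type*} [Fintype ι] [DecidableEq ι] (K : Matrix ι ι ℝ)
    (hK : K.PosSemidef) (hnonneg : ∀ i j, 0 ≤ K i j)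
    (hirr : ∀ i j, ∃ k : ℕ, 0 < k ∧ 0 < (K ^ k) i j)
    (D : Matrix ι ι ℝ) (hD : D = diagonal (K *ᵥ fun _ => (1 : ℝ)))
    (W : Matrix ι ι ℝ) (hW : W = D⁻¹ * K) :
    (∀ i, 0 < D i i) ∧
    (∀ i j, 0 ≤ W i j) ∧ (∀ i, ∑ j, W i j = 1) ∧
    (∀ i j, ∃ k : ℕ, 0 < k ∧ 0 < (W ^ k) i j) ∧
    (∀ μ ∈ spectrum ℂ (W.map Complex.ofReal), ∃ r : ℝ, μ = (r : ℂ) ∧ 0 ≤ r ∧ r ≤ 1) := by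
  have K_irr : K.IsIrreducible := (isIrreducible_iff_exists_pow_pos hnonneg).2 hirr
  have row_pos : ∀ i, 0 < (K *ᵥ 1) i := mulVec_one_pos_of_isIrreducible K_irr
  have D_inv : D⁻¹ = diagonal (K *ᵥ 1)⁻¹ :=
    hD ▸ inv_diagonal_of_ne_zero fun i ↦ (row_pos i).ne'
  have D_inv_psd : D⁻¹.PosSemidef := by
    rw [D_inv]
    exact .diagonal fun i ↦ inv_nonneg.2 (row_pos i).le
  have W_stoch : W ∈ rowStochastic ℝ ι := by
    rw [hW, D_inv]
    exact diagonal_inv_mul_mem_rowStochastic hnonneg row_pos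
  have W_irr : W.IsIrreducible := by
    rw [hW, D_inv]
    exact (isIrreducible_diagonal_mul_iff fun i ↦ inv_pos.2 (row_pos i)).2 K_irr
  obtain ⟨W_nonneg, W_sum⟩ := mem_rowStochastic_iff_sum.1 W_stoch
  refine ⟨fun i ↦ ?_, W_nonneg, W_sum, (isIrreducible_iff_exists_pow_pos W_nonneg).1 W_irr,
    fun μ hμ ↦ ?_⟩
  · rw [hD, diagonal_apply_eq]
    exact row_pos i
  · subst hW
    obtain ⟨r, ⟨r_nonneg, r_le⟩, hr⟩ :=
      exists_mem_Icc_of_mem_spectrum_map_mul D_inv_psd hK W_stoch hμ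
    exact ⟨r, hr, r_nonneg, r_le⟩

theorem stmt13 (n : ℕ) (K : Matrix (Fin n) (Fin n) ℝ)
    (hK : K.PosSemidef) (hnonneg : ∀ i j, 0 ≤ K i j)
    (hirr : ∀ i j, ∃ k : ℕ, 0 < k ∧ 0 < (K ^ k) i j)
    (hdiag : ∀ i, 0 < K i i)
    (D : Matrix (Fin n) (Fin n) ℝ)
    (hD : D = Matrix.diagonal (K *ᵥ fun _ => (1 : ℝ)))
    (W : Matrix (Fin n) (Fin n) ℝ) (hW : W = D⁻¹ * K) :
    (∀ i, 0 < D i i) ∧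
    (∀ i j, 0 ≤ W i j) ∧ (∀ i, ∑ j, W i j = 1) ∧
    (∀ i j, ∃ k : ℕ, 0 < k ∧ 0 < (W ^ k) i j) ∧
    (∀ μ ∈ spectrum ℂ (W.map Complex.ofReal), ∃ r : ℝ, μ = (r : ℂ) ∧ 0 ≤ r ∧ r ≤ 1) :=
  stmt13_general K hK hnonneg hirr D hD W hW
end
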